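/- Let θ be a flow for (A,F). Let γ ∈ [0,α), let P̄ be a finite Borel measure on ℝ^N with ∫ |w|^γ P̄(dw) < ∞, and let p̄ : ℝ^N → [0,∞) satisfy p̄(z) ≤ C₀ ∫ (1 + |z−w|)^{−(N+2)} P̄(dw) for all z ∈ ℝ^N and some C₀ > 0. Then there exists a constant C > 0, depending only on the data and on C₀, γ, such that for all 0 ≤ t < s ≤ T and all x ∈ ℝ^N: ∫_{ℝ^N} |𝕋_{s−t}^{-1}(θ_{t,s}(y) − x)|^γ (det 𝕋_{s−t})^{-1} p̄( 𝕋_{s−t}^{-1}(θ_{t,s}(y) − x) ) dy ≤ C, where θ_{t,s}(y) is the backward flow with terminal value y at time s. -/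

import Mathlib

/-!
Along two trajectories of the chain, one started from `x` at time `t` and one ending in `y` at time
`s`, the difference rescaled by `𝕋_{s-t}⁻¹` solves an integral equation whose right-hand side is at
most `k (s-t)⁻¹ (1 + ‖difference‖)`: the block structure of `A` and the thresholds on the Hölder
exponents of `F` are exactly what makes every rescaled term cost at most one factor `(s-t)⁻¹`
(`drift_scaled`). Grönwall's inequality over an interval of length `s - t` then yields a constant
independent of `s` and `t` (`flow_compare`):
`1 + ‖𝕋⁻¹(y - θ_{s,t}(x))‖ ≤ C (1 + ‖𝕋⁻¹(θ_{t,s}(y) - x)‖)`. Neither uniqueness nor smoothness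
of the flow is needed.

Writing `z = 𝕋⁻¹(θ_{t,s}(y) - x)` and applying the comparison at `x + 𝕋 w` instead of `x`, the kernel
`‖z‖^γ (1 + ‖z - w‖)^{-(N+2)}` is bounded by `(1 + ‖w‖)^γ (1 + ‖𝕋⁻¹(y - c)‖)^{-(N+2-γ)}` up to a
constant, for a point `c` that does not depend on `y` (`tail_bound`, `slice_bound`). Since
`γ < α < 2`, the exponent `N + 2 - γ` exceeds `N`, so the integral over `y` is at most a constant times
`det 𝕋 · (1 + ‖w‖)^γ` by a linear change of variables. Fubini's theorem and the moment hypothesis on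
the measure finish the argument.
-/

open MeasureTheory Real Set

noncomputable section

/-- The product state space `ℝ^N = ℝ^{d 0} × ⋯ × ℝ^{d (n-1)}`,
the `i`-th block having dimension `d i`. -/
abbrev E (n : ℕ) (d : Fin n → ℕ) : Type := ∀ i : Fin n, Fin (d i) → ℝ

/-- The action of the inverse intrinsic scale matrix `𝕋_h⁻¹ = h^{-1/α} 𝕄_h⁻¹`:
it rescales the `i`-th block (0-indexed) by `h^{-(1/α + i)}`. -/
def Tinv {n : ℕ} {d : Fin n → ℕ} (α h : ℝ) (x : E n d) : E n d :=
  fun i => (h ^ ((1 : ℝ) / α + ((i : ℕ) : ℝ)))⁻¹ • x i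

/-- `det 𝕋_h = h^{∑ i d_i (1/α + i)}` (0-indexed blocks). -/
def detT (n : ℕ) (d : Fin n → ℕ) (α h : ℝ) : ℝ :=
  h ^ (∑ i : Fin n, (d i : ℝ) * ((1 : ℝ) / α + ((i : ℕ) : ℝ)))

/-- A measurable Cauchy–Peano flow for `ẏ_u = A_u y_u + F(u, y_u)` on `[0,T]`:
`θ_{t,s}(z) = z - ∫_t^s (A_u θ_{u,s}(z) + F(u, θ_{u,s}(z))) du` (signed integral).
For `t ≤ s`, `θ_{t,s}(y)` is the backward flow with terminal value `y` at time `s`,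
and `θ_{s,t}(x)` is the forward flow started from `x` at time `t`. -/
def IsFlow {n : ℕ} {d : Fin n → ℕ} (T : ℝ) (A : ℝ → E n d →L[ℝ] E n d)
    (F : ℝ → E n d → E n d) (θ : ℝ → ℝ → E n d → E n d) : Prop :=
  Measurable (fun p : ℝ × ℝ × E n d => θ p.1 p.2.1 p.2.2) ∧
  ∀ t s : ℝ, t ∈ Icc (0 : ℝ) T → s ∈ Icc (0 : ℝ) T → ∀ z : E n d,
    θ t s z = z - ∫ u in t..s, (A u (θ u s z) + F u (θ u s z))

/-- The time-ordered resolvent of `A`, in applied form: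
`R_{s,t} x = x + ∫_t^s A_u (R_{u,t} x) du`, i.e. `∂_s R_{s,t} = A_s R_{s,t}`, `R_{t,t} = Id`. -/
def IsResolvent {n : ℕ} {d : Fin n → ℕ} (T : ℝ) (A : ℝ → E n d →L[ℝ] E n d)
    (R : ℝ → ℝ → E n d →L[ℝ] E n d) : Prop :=
  ∀ s t : ℝ, s ∈ Icc (0 : ℝ) T → t ∈ Icc (0 : ℝ) T → ∀ x : E n d,
    R s t x = x + ∫ u in t..s, A u (R u t x)

/-- The frozen shift `m̃^{τ,ξ}_{s,t}(x) = R_{s,t} x + ∫_t^s R_{s,u} F(u, θ_{u,τ}(ξ)) du`. -/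
def shiftm {n : ℕ} {d : Fin n → ℕ} (F : ℝ → E n d → E n d)
    (θ : ℝ → ℝ → E n d → E n d) (R : ℝ → ℝ → E n d →L[ℝ] E n d)
    (τ : ℝ) (ξ : E n d) (s t : ℝ) (x : E n d) : E n d :=
  R s t x + ∫ u in t..s, R s u (F u (θ u τ ξ))

/-- Family of smooth compactly supported probability-density mollifiers. -/
def IsMollifier {n : ℕ} {d : Fin n → ℕ} (ρ : Fin n → E n d → ℝ) : Prop :=
  ∀ i, ContDiff ℝ (⊤ : ℕ∞) (ρ i) ∧ HasCompactSupport (ρ i) ∧ (∀ ω, 0 ≤ ρ i ω) ∧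
    (∫ ω : E n d, ρ i ω) = 1

/-- The multiscale mollification `F^δ` of the drift `F`:
`F_i^δ(t,z) = ∫ F(t, z - δ_{i·} ⋄ ω)_i ρ_i(ω) dω`, block `j` being mollified at scale `δ_{ij}`
(equivalently, the anisotropic convolution of `F_i(t,·)` with the rescaled mollifier). -/
def molF {n : ℕ} {d : Fin n → ℕ} (ρ : Fin n → E n d → ℝ) (δ : Fin n → Fin n → ℝ)
    (F : ℝ → E n d → E n d) (t : ℝ) (z : E n d) : E n d :=
  fun i => ∫ ω : E n d, ρ i ω • F t (fun j => z j - δ i j • ω j) i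

/-- The standing assumptions of the degenerate chain setup: dimensions, sub-criticality,
lower-triangular block structure of `A`, upper-diagonal dependence, boundedness and
anisotropic Hölder continuity of `F` (indices are 0-based: block `i` here is block `i+1`
of the paper). -/
structure ChainHyp (n : ℕ) [NeZero n] (d : Fin n → ℕ) (α T K : ℝ)
    (A : ℝ → E n d →L[ℝ] E n d) (F : ℝ → E n d → E n d) (β : Fin n → ℝ) : Prop where
  hd : ∀ i, 1 ≤ d i
  hdmono : ∀ i j : Fin n, i ≤ j → d j ≤ d i
  hα₁ : 1 < α
  hα₂ : α < 2
  hT : 0 < T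
  hK : 1 ≤ K
  hAmeas : ∀ x : E n d, Measurable fun t => A t x
  hAbdd : ∃ CA : ℝ, ∀ t : ℝ, ‖A t‖ ≤ CA
  hAblock : ∀ (t : ℝ) (i j : Fin n) (v : Fin (d j) → ℝ),
    (j : ℕ) + 1 < (i : ℕ) → A t (Pi.single j v) i = 0
  hFmeas : Measurable fun p : ℝ × E n d => F p.1 p.2
  hFdep : ∀ (i : Fin n) (t : ℝ) (x x' : E n d), (∀ j, i ≤ j → x j = x' j) → F t x i = F t x' i
  hF0 : ∀ (t : ℝ) (i : Fin n), ‖F t 0 i‖ ≤ K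
  hβ0 : 0 < β 0 ∧ β 0 ≤ 1
  hβ : ∀ j : Fin n, 1 ≤ (j : ℕ) →
    (1 + α * (((j : ℕ) : ℝ) - 1)) / (1 + α * ((j : ℕ) : ℝ)) < β j ∧ β j ≤ 1
  hHolder : ∃ CH : ℝ, 0 < CH ∧
    (∀ (j : Fin n) (t : ℝ) (x x' : E n d), (∀ k, k ≠ j → x k = x' k) →
      ‖F t x 0 - F t x' 0‖ ≤ CH * ‖x j - x' j‖ ^ (β 0)) ∧
    ∀ (i j : Fin n), 1 ≤ (i : ℕ) → i ≤ j → ∀ (t : ℝ) (x x' : E n d),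
      (∀ k, k ≠ j → x k = x' k) →
      ‖F t x i - F t x' i‖ ≤ CH * ‖x j - x' j‖ ^ (β j)

/-! ### Grönwall inequality -/

theorem gronwall_real {f : ℝ → ℝ} {a b M k : ℝ} (hab : a ≤ b) (hk : 0 ≤ k)
    (hf : ContinuousOn f (Icc a b)) (hf0 : ∀ u ∈ Icc a b, 0 ≤ f u)
    (h : ∀ u ∈ Icc a b, f u ≤ M + k * ∫ v in a..u, f v) :
    f b ≤ M * exp (k * (b - a)) := by
  -- a continuous extension of `f` makes the majorant differentiable everywhere
  set g : ℝ → ℝ := IccExtend hab ((Icc a b).domRestrict f) with hg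
  have hgc : Continuous g := (continuousOn_iff_continuous_domRestrict.1 hf).Icc_extend'
  have hgf : ∀ u ∈ Icc a b, g u = f u := fun u hu => by
    rw [hg, IccExtend_of_mem _ _ hu]; rfl
  have hint : ∀ u ∈ Icc a b, ∫ v in a..u, f v = ∫ v in a..u, g v := fun u hu => by
    refine intervalIntegral.integral_congr fun v hv => ?_
    rw [uIcc_of_le hu.1] at hv
    exact (hgf v ⟨hv.1, hv.2.trans hu.2⟩).symm
  set w : ℝ → ℝ := fun u => M + k * ∫ v in a..u, g v with hw
  have hd : ∀ u, HasDerivAt w (k * g u) u := fun u =>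
    ((intervalIntegral.integral_hasDerivAt_right (hgc.intervalIntegrable _ _)
      (hgc.stronglyMeasurableAtFilter _ _) hgc.continuousAt).const_mul k).const_add M
  have hfw : ∀ u ∈ Icc a b, f u ≤ w u := fun u hu => by
    simpa only [hw, hint u hu] using h u hu
  have hwa : w a = M := by simp [hw]
  have hM : 0 ≤ M := by
    have := hfw a ⟨le_rfl, hab⟩
    rw [hwa] at this
    exact (hf0 a ⟨le_rfl, hab⟩).trans this
  have := norm_le_gronwallBound_of_norm_deriv_right_le (f := w) (f' := fun u => k * g u)
    (δ := M) (K := k) (ε := 0) (a := a) (b := b)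
    (fun u _ => (hd u).continuousAt.continuousWithinAt)
    (fun u _ => (hd u).hasDerivWithinAt) (by rw [hwa, Real.norm_of_nonneg hM])
    (fun u hu => by
      have hu' : u ∈ Icc a b := ⟨hu.1, hu.2.le⟩
      have h0 := hf0 u hu'
      have h1 := hfw u hu'
      rw [hgf u hu', Real.norm_of_nonneg (by positivity), Real.norm_of_nonneg (h0.trans h1),
        add_zero]
      gcongr) b ⟨hab, le_rfl⟩
  rw [gronwallBound_ε0] at this
  exact (hfw b ⟨hab, le_rfl⟩).trans ((le_abs_self _).trans this)

theorem gronwall_fwd {X : Type*} [NormedAddCommGroup X] [NormedSpace ℝ X]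
    {δ g : ℝ → X} {a b k : ℝ} (hab : a ≤ b) (hk : 0 ≤ k)
    (hg : IntervalIntegrable g volume a b)
    (hδ : ∀ u ∈ Icc a b, δ u = δ a + ∫ v in a..u, g v)
    (hb : ∀ u ∈ Icc a b, ‖g u‖ ≤ k * (1 + ‖δ u‖)) :
    1 + ‖δ b‖ ≤ (1 + ‖δ a‖) * exp (k * (b - a)) := by
  have hc : ContinuousOn δ (Icc a b) := by
    have := intervalIntegral.continuousOn_primitive_interval' hg left_mem_uIcc
    rw [uIcc_of_le hab] at this
    exact (continuousOn_const.add this).congr hδ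
  have hc' : ContinuousOn (fun u => 1 + ‖δ u‖) (Icc a b) := continuousOn_const.add hc.norm
  refine gronwall_real (f := fun u => 1 + ‖δ u‖) hab hk hc' (fun u _ => by positivity) ?_
  intro u hu
  have hsub : Icc a u ⊆ Icc a b := Icc_subset_Icc_right hu.2
  have h1 : ‖∫ v in a..u, g v‖ ≤ ∫ v in a..u, k * (1 + ‖δ v‖) := by
    refine intervalIntegral.norm_integral_le_of_norm_le hu.1 ?_ ?_
    · exact ae_of_all _ fun v hv => hb v (hsub (Ioc_subset_Icc_self hv))
    · refine ContinuousOn.intervalIntegrable ?_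
      rw [uIcc_of_le hu.1]
      exact continuousOn_const.mul (hc'.mono hsub)
  rw [intervalIntegral.integral_const_mul] at h1
  have h2 := norm_add_le (δ a) (∫ v in a..u, g v)
  rw [← hδ u hu] at h2
  linarith

/-- Grönwall's inequality for integral equations, the two times being in either order. -/
theorem gronwall_ode {X : Type*} [NormedAddCommGroup X] [NormedSpace ℝ X]
    {δ g : ℝ → X} {a b k : ℝ} (hk : 0 ≤ k)
    (hg : IntervalIntegrable g volume a b)
    (hδ : ∀ u ∈ uIcc a b, δ u = δ a + ∫ v in a..u, g v)
    (hb : ∀ u ∈ uIcc a b, ‖g u‖ ≤ k * (1 + ‖δ u‖)) :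
    1 + ‖δ b‖ ≤ (1 + ‖δ a‖) * exp (k * |b - a|) := by
  rcases le_total a b with hab | hab
  · rw [uIcc_of_le hab] at hδ hb
    rw [abs_of_nonneg (sub_nonneg.2 hab)]
    exact gronwall_fwd hab hk hg hδ hb
  · rw [uIcc_of_ge hab] at hδ hb
    rw [abs_of_nonpos (sub_nonpos.2 hab)]
    have := gronwall_fwd (δ := fun u => δ (-u)) (g := fun u => -g (-u)) (a := -a) (b := -b)
      (neg_le_neg hab) hk ?_ ?_ ?_
    · have e : -b - -a = -(b - a) := by ring
      simpa only [neg_neg, e] using this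
    · have h := (hg.comp_mul_left (c := -1)).neg
      have e : (-fun u => g (-1 * u)) = fun u => -g (-u) := by ext u; simp
      rw [e] at h
      simpa [div_neg] using h
    · intro u hu
      simp only [neg_neg]
      rw [hδ (-u) ⟨by linarith [hu.2], by linarith [hu.1]⟩, intervalIntegral.integral_neg,
        intervalIntegral.integral_comp_neg, neg_neg, intervalIntegral.integral_symm]
    · intro u hu
      rw [norm_neg]
      exact hb (-u) ⟨by linarith [hu.2], by linarith [hu.1]⟩

/-! ### Scaling of the drift -/

/-- Bounds for increments in a single block add up, by changing the blocks one at a time. -/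
theorem norm_sub_le_sum_of_coord {n : ℕ} {d : Fin n → ℕ} {X : Type*} [NormedAddCommGroup X]
    (G : E n d → X) (φ : Fin n → ℝ → ℝ)
    (hG : ∀ (j : Fin n) (x x' : E n d), (∀ k, k ≠ j → x k = x' k) →
      ‖G x - G x'‖ ≤ φ j ‖x j - x' j‖) (x x' : E n d) :
    ‖G x - G x'‖ ≤ ∑ j, φ j ‖x j - x' j‖ := by
  have key : ∀ S : Finset (Fin n),
      ‖G (S.piecewise x x') - G x'‖ ≤ ∑ j ∈ S, φ j ‖x j - x' j‖ := by
    intro S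
    induction S using Finset.induction_on with
    | empty => simp
    | insert j S hj ih =>
      rw [Finset.sum_insert hj]
      have h1 := hG j ((insert j S).piecewise x x') (S.piecewise x x') (fun k hk => by
        by_cases hkS : k ∈ S <;> simp [Finset.piecewise, hk, hkS])
      have e1 : (insert j S).piecewise x x' j = x j := by simp
      have e2 : S.piecewise x x' j = x' j := by simp [hj]
      rw [e1, e2] at h1
      calc _ ≤ _ := norm_sub_le_norm_sub_add_norm_sub _ (G (S.piecewise x x')) _
        _ ≤ _ := add_le_add h1 ih
  simpa using key Finset.univ

/-- Hölder bounds for all blocks of `F` in all variables, in one format. The last inequality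
`-1 ≤ (1/α + j) b - (1/α + i)` is the scaling form of the thresholds on the Hölder exponents: at the
intrinsic scale `h` the increment of block `i` of `F` costs at most a constant times `h⁻¹`. -/
theorem holder_all {n : ℕ} [NeZero n] {d : Fin n → ℕ} {α T K : ℝ}
    {A : ℝ → E n d →L[ℝ] E n d} {F : ℝ → E n d → E n d} {β : Fin n → ℝ}
    (hc : ChainHyp n d α T K A F β) :
    ∃ (CH : ℝ) (b : Fin n → Fin n → ℝ), 0 < CH ∧
      (∀ i j, i ≤ j → 0 < b i j ∧ b i j ≤ 1 ∧
        -1 ≤ (1 / α + ((j : ℕ) : ℝ)) * b i j - (1 / α + ((i : ℕ) : ℝ))) ∧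
      ∀ (i : Fin n) (t : ℝ) (x x' : E n d),
        ‖F t x i - F t x' i‖ ≤ CH * ∑ j, if i ≤ j then ‖x j - x' j‖ ^ b i j else 0 := by
  obtain ⟨CH, hCH, hH0, hH1⟩ := hc.hHolder
  have hα := hc.hα₁
  have hα0 : 0 < α := by linarith
  refine ⟨CH, fun i j => if (i : ℕ) = 0 then β 0 else β j, hCH, ?_, ?_⟩
  · intro i j hij
    have hij' : ((i : ℕ) : ℝ) ≤ ((j : ℕ) : ℝ) := by exact_mod_cast hij
    by_cases hi : (i : ℕ) = 0
    · simp only [hi, if_true]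
      refine ⟨hc.hβ0.1, hc.hβ0.2, ?_⟩
      have h1 : 1 / α ≤ 1 := by rw [div_le_one hα0]; exact hα.le
      have h2 : 0 ≤ (1 / α + ((j : ℕ) : ℝ)) * β 0 := mul_nonneg (by positivity) hc.hβ0.1.le
      push_cast
      linarith
    · simp only [hi, if_false]
      have hi1 : 1 ≤ (i : ℕ) := Nat.one_le_iff_ne_zero.2 hi
      have hj1 : 1 ≤ (j : ℕ) := hi1.trans hij
      have hj1' : (1 : ℝ) ≤ ((j : ℕ) : ℝ) := by exact_mod_cast hj1
      obtain ⟨hb, hb1⟩ := hc.hβ j hj1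
      have hden : 0 < 1 + α * ((j : ℕ) : ℝ) := by positivity
      have hnum : 0 < 1 + α * (((j : ℕ) : ℝ) - 1) := by
        have := mul_nonneg hα0.le (sub_nonneg.2 hj1')
        linarith
      refine ⟨(div_pos hnum hden).trans hb, hb1, ?_⟩
      rw [div_lt_iff₀ hden] at hb
      have e : (1 / α + ((j : ℕ) : ℝ)) * β j = β j * (1 + α * ((j : ℕ) : ℝ)) / α := by
        field_simp
      have e2 : (1 + α * (((j : ℕ) : ℝ) - 1)) / α = 1 / α + ((j : ℕ) : ℝ) - 1 := by
        field_simp; ring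
      have := (div_le_div_iff_of_pos_right hα0).2 hb.le
      rw [e2, ← e] at this
      linarith
  · intro i t x x'
    rw [Finset.mul_sum]
    refine norm_sub_le_sum_of_coord (fun z => F t z i)
      (fun j r => CH * if i ≤ j then r ^ (if (i : ℕ) = 0 then β 0 else β j) else 0) ?_ x x'
    intro j y y' hy
    by_cases hij : i ≤ j
    · simp only [hij, if_true]
      by_cases hi : (i : ℕ) = 0
      · have : i = 0 := Fin.ext (by simpa using hi)
        subst this
        simp only [hi, if_true]
        exact hH0 j t y y' hy
      · simp only [hi, if_false]
        exact hH1 i j (Nat.one_le_iff_ne_zero.2 hi) hij t y y' hy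
    · have := hc.hFdep i t y y' (fun k hk => hy k (by rintro rfl; exact hij hk))
      simp [hij, this]

theorem rpow_le_mul_inv {T h e B : ℝ} (hh : 0 < h) (hhT : h ≤ T) (he : -1 ≤ e) (heB : e ≤ B) :
    h ^ e ≤ (max 1 T) ^ (B + 1) * h⁻¹ := by
  have h1 : h ^ e = h ^ (e + 1) * h⁻¹ := by
    rw [← Real.rpow_neg_one h, ← Real.rpow_add hh]; ring_nf
  rw [h1]
  gcongr
  calc h ^ (e + 1) ≤ (max 1 T) ^ (e + 1) :=
        Real.rpow_le_rpow hh.le (hhT.trans (le_max_right _ _)) (by linarith)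
    _ ≤ _ := Real.rpow_le_rpow_of_exponent_le (le_max_left _ _) (by linarith)

theorem norm_Tinv_apply {n : ℕ} {d : Fin n → ℕ} {α h : ℝ} (hh : 0 < h) (x : E n d) (i : Fin n) :
    ‖Tinv α h x i‖ = (h ^ ((1 : ℝ) / α + ((i : ℕ) : ℝ)))⁻¹ * ‖x i‖ := by
  have : 0 < h ^ ((1 : ℝ) / α + ((i : ℕ) : ℝ)) := Real.rpow_pos_of_pos hh _
  rw [Tinv, norm_smul, Real.norm_of_nonneg (by positivity)]

theorem norm_apply_le_Tinv {n : ℕ} {d : Fin n → ℕ} {α h : ℝ} (hh : 0 < h) (x : E n d)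
    (i : Fin n) : ‖x i‖ ≤ h ^ ((1 : ℝ) / α + ((i : ℕ) : ℝ)) * ‖Tinv α h x‖ := by
  have h0 : 0 < h ^ ((1 : ℝ) / α + ((i : ℕ) : ℝ)) := Real.rpow_pos_of_pos hh _
  have := norm_le_pi_norm (Tinv α h x) i
  rwa [norm_Tinv_apply hh, inv_mul_le_iff₀ h0] at this

/-- At the intrinsic scale `h`, the drift `A + F` is Lipschitz up to an additive constant, with
constant of order `h⁻¹`. -/
theorem drift_scaled {n : ℕ} [NeZero n] {d : Fin n → ℕ} {α T K : ℝ}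
    {A : ℝ → E n d →L[ℝ] E n d} {F : ℝ → E n d → E n d} {β : Fin n → ℝ}
    (hc : ChainHyp n d α T K A F β) :
    ∃ k : ℝ, 0 < k ∧ ∀ h : ℝ, 0 < h → h ≤ T → ∀ (u : ℝ) (x x' : E n d),
      ‖Tinv α h ((A u x + F u x) - (A u x' + F u x'))‖
        ≤ k * h⁻¹ * (1 + ‖Tinv α h (x - x')‖) := by
  obtain ⟨CH, b, hCH, hb, hF⟩ := holder_all hc
  obtain ⟨CA, hCA⟩ := hc.hAbdd
  have hCA0 : 0 ≤ CA := (norm_nonneg _).trans (hCA 0)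
  have hα0 : 0 < α := by linarith [hc.hα₁]
  have hα1 : 1 / α ≤ 1 := by rw [div_le_one hα0]; exact hc.hα₁.le
  have hα1' : 0 < 1 / α := by positivity
  set L : ℝ := (max 1 T) ^ ((n : ℝ) + 1 + 1) with hL
  have hL0 : 0 < L := Real.rpow_pos_of_pos (lt_of_lt_of_le one_pos (le_max_left _ _)) _
  refine ⟨(n : ℝ) * (CA * L) + CH * ((n : ℝ) * L) + 1, by positivity, ?_⟩
  intro h hh hhT u x x'
  set D := ‖Tinv α h (x - x')‖ with hD
  have hD0 : 0 ≤ D := norm_nonneg _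
  have hexp : ∀ i j : Fin n, -1 ≤ ((j : ℕ) : ℝ) - ((i : ℕ) : ℝ) →
      (h ^ ((1 : ℝ) / α + ((i : ℕ) : ℝ)))⁻¹ * h ^ ((1 : ℝ) / α + ((j : ℕ) : ℝ)) ≤ L * h⁻¹ := by
    intro i j hij
    rw [← Real.rpow_neg hh.le, ← Real.rpow_add hh]
    have hj : ((j : ℕ) : ℝ) ≤ n := by exact_mod_cast j.2.le
    have hi : (0 : ℝ) ≤ ((i : ℕ) : ℝ) := by positivity
    exact rpow_le_mul_inv hh hhT (by linarith) (by linarith)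
  rw [pi_norm_le_iff_of_nonneg (by positivity)]
  intro i
  have hs : 0 < h ^ ((1 : ℝ) / α + ((i : ℕ) : ℝ)) := Real.rpow_pos_of_pos hh _
  rw [norm_Tinv_apply hh]
  -- block `i` of `A` only sees blocks `j ≥ i - 1`, so at worst one factor `h⁻¹` is lost
  have hA : (h ^ ((1 : ℝ) / α + ((i : ℕ) : ℝ)))⁻¹ * ‖A u (x - x') i‖
      ≤ (n : ℝ) * (CA * L) * h⁻¹ * D := by
    have e : A u (x - x') = ∑ j, A u (Pi.single j ((x - x') j)) := by
      rw [← map_sum, Finset.univ_sum_single]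
    have hj : ∀ j : Fin n, (h ^ ((1 : ℝ) / α + ((i : ℕ) : ℝ)))⁻¹ *
        ‖A u (Pi.single j ((x - x') j)) i‖ ≤ CA * L * h⁻¹ * D := by
      intro j
      by_cases hij : (j : ℕ) + 1 < (i : ℕ)
      · rw [hc.hAblock u i j _ hij, norm_zero, mul_zero]; positivity
      · have hij' : ((i : ℕ) : ℝ) ≤ ((j : ℕ) : ℝ) + 1 := by exact_mod_cast not_lt.1 hij
        have h1 : ‖A u (Pi.single j ((x - x') j)) i‖ ≤ CA * ‖(x - x') j‖ := by
          refine (norm_le_pi_norm _ i).trans ((A u).le_of_opNorm_le (hCA u) _ |>.trans ?_)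
          rw [Pi.norm_single]
        calc _ ≤ (h ^ ((1 : ℝ) / α + ((i : ℕ) : ℝ)))⁻¹ *
              (CA * (h ^ ((1 : ℝ) / α + ((j : ℕ) : ℝ)) * D)) := by
              gcongr
              exact h1.trans (mul_le_mul_of_nonneg_left (norm_apply_le_Tinv hh _ j) hCA0)
          _ = CA * ((h ^ ((1 : ℝ) / α + ((i : ℕ) : ℝ)))⁻¹ *
              h ^ ((1 : ℝ) / α + ((j : ℕ) : ℝ))) * D := by ring
          _ ≤ CA * (L * h⁻¹) * D := mul_le_mul_of_nonneg_right
              (mul_le_mul_of_nonneg_left (hexp i j (by linarith)) hCA0) hD0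
          _ = _ := by ring
    rw [e, Finset.sum_apply]
    calc _ ≤ (h ^ ((1 : ℝ) / α + ((i : ℕ) : ℝ)))⁻¹ *
          ∑ j, ‖A u (Pi.single j ((x - x') j)) i‖ := by gcongr; exact norm_sum_le _ _
      _ ≤ ∑ _j : Fin n, CA * L * h⁻¹ * D := by
          rw [Finset.mul_sum]; exact Finset.sum_le_sum fun j _ => hj j
      _ = _ := by simp; ring
  -- sublinear powers of the rescaled difference are absorbed by `D ^ b ≤ 1 + D`
  have hF' : (h ^ ((1 : ℝ) / α + ((i : ℕ) : ℝ)))⁻¹ * ‖F u x i - F u x' i‖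
      ≤ CH * ((n : ℝ) * L) * h⁻¹ * (1 + D) := by
    have hj : ∀ j : Fin n, (h ^ ((1 : ℝ) / α + ((i : ℕ) : ℝ)))⁻¹ *
        (if i ≤ j then ‖x j - x' j‖ ^ b i j else 0) ≤ L * h⁻¹ * (1 + D) := by
      intro j
      split_ifs with hij
      · obtain ⟨hb0, hb1, hb2⟩ := hb i j hij
        have hD1 : D ^ b i j ≤ 1 + D := by
          calc D ^ b i j ≤ (1 + D) ^ b i j := by gcongr; linarith
            _ ≤ (1 + D) ^ (1 : ℝ) := Real.rpow_le_rpow_of_exponent_le (by linarith) hb1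
            _ = _ := Real.rpow_one _
        have hjn : ((j : ℕ) : ℝ) ≤ n := by exact_mod_cast j.2.le
        have hi0 : (0 : ℝ) ≤ ((i : ℕ) : ℝ) := by positivity
        have hj0 : (0 : ℝ) ≤ ((j : ℕ) : ℝ) := by positivity
        have hexp2 : h ^ (((1 : ℝ) / α + ((j : ℕ) : ℝ)) * b i j - ((1 : ℝ) / α + ((i : ℕ) : ℝ)))
            ≤ L * h⁻¹ := by
          refine rpow_le_mul_inv hh hhT hb2 ?_
          have : ((1 : ℝ) / α + ((j : ℕ) : ℝ)) * b i j ≤ ((1 : ℝ) / α + ((j : ℕ) : ℝ)) * 1 := by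
            gcongr
          linarith
        calc _ ≤ (h ^ ((1 : ℝ) / α + ((i : ℕ) : ℝ)))⁻¹ *
              (h ^ ((1 : ℝ) / α + ((j : ℕ) : ℝ)) * D) ^ b i j := by
              gcongr
              exact norm_apply_le_Tinv hh (x - x') j
          _ = h ^ (((1 : ℝ) / α + ((j : ℕ) : ℝ)) * b i j - ((1 : ℝ) / α + ((i : ℕ) : ℝ)))
              * D ^ b i j := by
              rw [Real.mul_rpow (by positivity) hD0, ← Real.rpow_mul hh.le, sub_eq_neg_add,
                Real.rpow_add hh (-((1 : ℝ) / α + ((i : ℕ) : ℝ))), Real.rpow_neg hh.le]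
              ring
          _ ≤ _ := by gcongr
      · rw [mul_zero]; positivity
    calc _ ≤ (h ^ ((1 : ℝ) / α + ((i : ℕ) : ℝ)))⁻¹ *
          (CH * ∑ j, if i ≤ j then ‖x j - x' j‖ ^ b i j else 0) := by
          gcongr; exact hF i u x x'
      _ = CH * ∑ j, (h ^ ((1 : ℝ) / α + ((i : ℕ) : ℝ)))⁻¹ *
          (if i ≤ j then ‖x j - x' j‖ ^ b i j else 0) := by
          rw [← Finset.mul_sum]; ring
      _ ≤ CH * ∑ _j : Fin n, L * h⁻¹ * (1 + D) := by
          exact mul_le_mul_of_nonneg_left (Finset.sum_le_sum fun j _ => hj j) hCH.le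
      _ = _ := by simp; ring
  have e : ((A u x + F u x) - (A u x' + F u x')) i = A u (x - x') i + (F u x i - F u x' i) := by
    rw [map_sub]; simp only [Pi.add_apply, Pi.sub_apply]; abel
  rw [e]
  calc _ ≤ (h ^ ((1 : ℝ) / α + ((i : ℕ) : ℝ)))⁻¹ * (‖A u (x - x') i‖ + ‖F u x i - F u x' i‖) := by
        gcongr; exact norm_add_le _ _
    _ ≤ (n : ℝ) * (CA * L) * h⁻¹ * D + CH * ((n : ℝ) * L) * h⁻¹ * (1 + D) := by
        rw [mul_add]; exact add_le_add hA hF'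
    _ ≤ (n : ℝ) * (CA * L) * h⁻¹ * (1 + D) + CH * ((n : ℝ) * L) * h⁻¹ * (1 + D)
        + 1 * h⁻¹ * (1 + D) := by
        have : (n : ℝ) * (CA * L) * h⁻¹ * D ≤ (n : ℝ) * (CA * L) * h⁻¹ * (1 + D) := by
          gcongr; linarith
        have : 0 ≤ 1 * h⁻¹ * (1 + D) := by positivity
        linarith
    _ = _ := by ring

/-- Linear growth of the drift, which keeps trajectories bounded. -/
theorem drift_growth {n : ℕ} [NeZero n] {d : Fin n → ℕ} {α T K : ℝ}
    {A : ℝ → E n d →L[ℝ] E n d} {F : ℝ → E n d → E n d} {β : Fin n → ℝ}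
    (hc : ChainHyp n d α T K A F β) :
    ∃ k : ℝ, 0 < k ∧ ∀ (u : ℝ) (x : E n d), ‖A u x + F u x‖ ≤ k * (1 + ‖x‖) := by
  obtain ⟨CH, b, hCH, hb, hF⟩ := holder_all hc
  obtain ⟨CA, hCA⟩ := hc.hAbdd
  have hCA0 : 0 ≤ CA := (norm_nonneg _).trans (hCA 0)
  have hK := hc.hK
  refine ⟨CA + (CH * n + K), by positivity, fun u x => ?_⟩
  have h1 : ‖A u x‖ ≤ CA * (1 + ‖x‖) :=
    ((A u).le_of_opNorm_le (hCA u) x).trans (by gcongr; linarith)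
  have h2 : ‖F u x‖ ≤ (CH * n + K) * (1 + ‖x‖) := by
    rw [pi_norm_le_iff_of_nonneg (by positivity)]
    intro i
    have hj : ∀ j : Fin n, (if i ≤ j then ‖x j - (0 : E n d) j‖ ^ b i j else 0) ≤ 1 + ‖x‖ := by
      intro j
      split_ifs with hij
      · obtain ⟨hb0, hb1, -⟩ := hb i j hij
        rw [Pi.zero_apply, sub_zero]
        calc ‖x j‖ ^ b i j ≤ (1 + ‖x‖) ^ b i j := by
              gcongr
              have := norm_le_pi_norm x j
              linarith
          _ ≤ (1 + ‖x‖) ^ (1 : ℝ) :=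
              Real.rpow_le_rpow_of_exponent_le (by linarith [norm_nonneg x]) hb1
          _ = _ := Real.rpow_one _
      · positivity
    have h3 : ‖F u x i - F u 0 i‖ ≤ CH * n * (1 + ‖x‖) := by
      calc _ ≤ _ := hF i u x 0
        _ ≤ CH * ∑ _j : Fin n, (1 + ‖x‖) := by
          gcongr with j _; exact hj j
        _ = _ := by simp; ring
    have h4 := hc.hF0 u i
    have h5 : ‖F u x i‖ ≤ ‖F u x i - F u 0 i‖ + ‖F u 0 i‖ := by
      simpa using norm_add_le (F u x i - F u 0 i) (F u 0 i)
    have h6 : K ≤ K * (1 + ‖x‖) := le_mul_of_one_le_right (by linarith) (by simp)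
    linarith
  calc _ ≤ _ := norm_add_le _ _
    _ ≤ _ := add_le_add h1 h2
    _ = _ := by ring

/-! ### The flow -/

theorem measurable_drift {n : ℕ} [NeZero n] {d : Fin n → ℕ} {α T K : ℝ}
    {A : ℝ → E n d →L[ℝ] E n d} {F : ℝ → E n d → E n d} {β : Fin n → ℝ}
    (hc : ChainHyp n d α T K A F β) {f : ℝ → E n d} (hf : Measurable f) :
    Measurable fun u => A u (f u) + F u (f u) := by
  have h1 : Measurable (Function.uncurry fun (x : E n d) (u : ℝ) => A u x) :=
    measurable_uncurry_of_continuous_of_measurable (fun u => (A u).continuous) hc.hAmeas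
  have h2 : Measurable fun u => A u (f u) := h1.comp (hf.prodMk measurable_id)
  exact h2.add (hc.hFmeas.comp (measurable_id.prodMk hf))

/-- The drift along the flow is integrable, so that the integral in the flow equation is never a
junk value: a non-integrable drift on `[a, s]` would give `θ a s z = z`, so in every case
`θ · s z` stays bounded, hence so does the drift. -/
theorem flow_integrable {n : ℕ} [NeZero n] {d : Fin n → ℕ} {α T K : ℝ}
    {A : ℝ → E n d →L[ℝ] E n d} {F : ℝ → E n d → E n d} {β : Fin n → ℝ}
    (hc : ChainHyp n d α T K A F β) {θ : ℝ → ℝ → E n d → E n d} (hθ : IsFlow T A F θ)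
    {s : ℝ} (hs : s ∈ Icc (0 : ℝ) T) (z : E n d) {a b : ℝ} (ha : a ∈ Icc (0 : ℝ) T)
    (hb : b ∈ Icc (0 : ℝ) T) :
    IntervalIntegrable (fun u => A u (θ u s z) + F u (θ u s z)) volume a b := by
  obtain ⟨k, hk, hgr⟩ := drift_growth hc
  have hT := hc.hT
  have hm : Measurable fun u => θ u s z :=
    hθ.1.comp (measurable_id.prodMk (measurable_const.prodMk measurable_const))
  set g : ℝ → E n d := fun u => A u (θ u s z) + F u (θ u s z) with hg
  have hgm : Measurable g := measurable_drift hc hm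
  have hbd : ∀ t ∈ Icc (0 : ℝ) T, 1 + ‖θ t s z‖ ≤ (1 + ‖z‖) * exp (k * T) := by
    intro t ht
    by_cases hi : IntervalIntegrable g volume s t
    · have hss : θ s s z = z := by rw [hθ.2 s s hs hs z]; simp
      have hsub : uIcc s t ⊆ Icc 0 T := by
        rw [uIcc_eq_union]
        exact union_subset (Icc_subset_Icc hs.1 ht.2) (Icc_subset_Icc ht.1 hs.2)
      have := gronwall_ode (δ := fun u => θ u s z) hk.le hi (fun u hu => by
        simp only [hss]
        rw [hθ.2 u s (hsub hu) hs z, intervalIntegral.integral_symm, sub_neg_eq_add])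
        (fun u _ => hgr u _)
      simp only [hss] at this
      refine this.trans ?_
      gcongr
      rw [abs_le]
      constructor <;> linarith [hs.1, hs.2, ht.1, ht.2]
    · rw [hθ.2 t s ht hs z, intervalIntegral.integral_undef (fun h => hi h.symm), sub_zero]
      have : 1 ≤ exp (k * T) := Real.one_le_exp (by positivity)
      exact le_mul_of_one_le_right (by positivity) this
  have hsub : uIcc a b ⊆ Icc 0 T := by
    rw [uIcc_eq_union]
    exact union_subset (Icc_subset_Icc ha.1 hb.2) (Icc_subset_Icc hb.1 ha.2)
  refine (intervalIntegrable_const (c := k * ((1 + ‖z‖) * exp (k * T)))).mono_fun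
    hgm.aestronglyMeasurable ?_
  refine (ae_restrict_iff' measurableSet_uIoc).2 (ae_of_all _ fun u hu => ?_)
  refine (hgr u _).trans (le_trans ?_ (le_abs_self _))
  gcongr
  exact hbd u (hsub (uIoc_subset_uIcc hu))

/-- The rescaling `Tinv α h` as a continuous linear map. -/
def TinvL {n : ℕ} (d : Fin n → ℕ) (α h : ℝ) : E n d →L[ℝ] E n d :=
  ContinuousLinearMap.pi fun i =>
    (h ^ ((1 : ℝ) / α + ((i : ℕ) : ℝ)))⁻¹ • ContinuousLinearMap.proj i

theorem TinvL_apply {n : ℕ} {d : Fin n → ℕ} (α h : ℝ) (x : E n d) :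
    TinvL d α h x = Tinv α h x := rfl

/-- Approximate Lipschitz property of the flow: at the intrinsic scale `s - t`, the distance at time
`s` of two trajectories is controlled by their distance at time `t`, up to a multiplicative and an
additive constant. The trajectories are `θ · t x`, starting from `x`, and `θ · s y`, ending in `y`. -/
theorem flow_compare {n : ℕ} [NeZero n] {d : Fin n → ℕ} {α T K : ℝ}
    {A : ℝ → E n d →L[ℝ] E n d} {F : ℝ → E n d → E n d} {β : Fin n → ℝ}
    (hc : ChainHyp n d α T K A F β) {θ : ℝ → ℝ → E n d → E n d} (hθ : IsFlow T A F θ) :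
    ∃ C : ℝ, 0 < C ∧ ∀ t s : ℝ, 0 ≤ t → t < s → s ≤ T → ∀ x y : E n d,
      1 + ‖Tinv α (s - t) (y - θ s t x)‖ ≤ C * (1 + ‖Tinv α (s - t) (θ t s y - x)‖) := by
  obtain ⟨k, hk, hdr⟩ := drift_scaled hc
  refine ⟨exp k, exp_pos _, fun t s ht hts hs x y => ?_⟩
  have hh : 0 < s - t := sub_pos.2 hts
  have htI : t ∈ Icc (0 : ℝ) T := ⟨ht, hts.le.trans hs⟩
  have hsI : s ∈ Icc (0 : ℝ) T := ⟨ht.trans hts.le, hs⟩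
  set gX : ℝ → E n d := fun u => A u (θ u t x) + F u (θ u t x) with hgX
  set gY : ℝ → E n d := fun u => A u (θ u s y) + F u (θ u s y) with hgY
  have hiX : ∀ {a b}, a ∈ Icc (0 : ℝ) T → b ∈ Icc (0 : ℝ) T → IntervalIntegrable gX volume a b :=
    fun ha hb => flow_integrable hc hθ htI x ha hb
  have hiY : ∀ {a b}, a ∈ Icc (0 : ℝ) T → b ∈ Icc (0 : ℝ) T → IntervalIntegrable gY volume a b :=
    fun ha hb => flow_integrable hc hθ hsI y ha hb
  have hxx : θ t t x = x := by rw [hθ.2 t t htI htI x]; simp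
  have hyy : θ s s y = y := by rw [hθ.2 s s hsI hsI y]; simp
  have hi := (hiY htI hsI).sub (hiX htI hsI)
  have := gronwall_ode (δ := fun u => TinvL d α (s - t) (θ u s y - θ u t x))
    (g := fun u => TinvL d α (s - t) (gY u - gX u)) (a := t) (b := s)
    (k := k * (s - t)⁻¹) (by positivity) ?_ ?_ ?_
  · have e : k * (s - t)⁻¹ * |s - t| = k := by
      rw [abs_of_pos hh, mul_assoc, inv_mul_cancel₀ hh.ne', mul_one]
    simp only [hxx, hyy, e, TinvL_apply] at this
    linarith
  · exact ⟨(TinvL d α (s - t)).integrable_comp hi.1, (TinvL d α (s - t)).integrable_comp hi.2⟩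
  · intro u hu
    rw [uIcc_of_le hts.le] at hu
    have huI : u ∈ Icc (0 : ℝ) T := ⟨ht.trans hu.1, hu.2.trans hs⟩
    rw [ContinuousLinearMap.intervalIntegral_comp_comm _ ((hiY htI huI).sub (hiX htI huI)),
      ← map_add, intervalIntegral.integral_sub (hiY htI huI) (hiX htI huI)]
    congr 1
    have h1 := hθ.2 u s huI hsI y
    have h2 := hθ.2 t s htI hsI y
    have h3 := hθ.2 u t huI htI x
    have h4 := intervalIntegral.integral_add_adjacent_intervals (hiY htI huI) (hiY huI hsI)
    rw [intervalIntegral.integral_symm] at h3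
    rw [h1, h2, h3, hxx, ← h4]
    abel
  · intro u _
    exact hdr (s - t) hh (by linarith) u _ _

/-! ### Change of variables -/

theorem det_TinvL {n : ℕ} {d : Fin n → ℕ} {α h : ℝ} (hh : 0 < h) :
    LinearMap.det (TinvL d α h : E n d →ₗ[ℝ] E n d) = (detT n d α h)⁻¹ := by
  classical
  set B := Pi.basis fun i : Fin n => Pi.basisFun ℝ (Fin (d i)) with hB
  have e : LinearMap.toMatrix B B (TinvL d α h : E n d →ₗ[ℝ] E n d) = Matrix.diagonal
      fun q : (Σ i : Fin n, Fin (d i)) => (h ^ ((1 : ℝ) / α + ((q.1 : ℕ) : ℝ)))⁻¹ := by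
    ext ⟨i, a⟩ ⟨j, b⟩
    have hr : B.repr (TinvL d α h (B ⟨j, b⟩)) ⟨i, a⟩ =
        (h ^ ((1 : ℝ) / α + ((i : ℕ) : ℝ)))⁻¹ * B.repr (B ⟨j, b⟩) ⟨i, a⟩ := rfl
    rw [LinearMap.toMatrix_apply, ContinuousLinearMap.coe_coe, hr, B.repr_self,
      Matrix.diagonal_apply, Finsupp.single_apply]
    by_cases hij : (⟨i, a⟩ : Σ i : Fin n, Fin (d i)) = ⟨j, b⟩
    · rw [if_pos hij, if_pos hij.symm, mul_one]
    · rw [if_neg hij, if_neg (Ne.symm hij), mul_zero]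
  rw [← LinearMap.det_toMatrix B, e, Matrix.det_diagonal, Fintype.prod_sigma, detT,
    Real.rpow_sum_of_pos hh, ← Finset.prod_inv_distrib]
  refine Finset.prod_congr rfl fun i _ => ?_
  dsimp only
  rw [Finset.prod_const, Finset.card_univ, Fintype.card_fin, mul_comm (d i : ℝ),
    Real.rpow_mul hh.le, Real.rpow_natCast, inv_pow]

theorem detT_pos {n : ℕ} {d : Fin n → ℕ} {α h : ℝ} (hh : 0 < h) : 0 < detT n d α h :=
  Real.rpow_pos_of_pos hh _

theorem map_TinvL {n : ℕ} {d : Fin n → ℕ} {α h : ℝ} (hh : 0 < h) :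
    Measure.map (TinvL d α h) (volume : Measure (E n d))
      = ENNReal.ofReal (detT n d α h) • volume := by
  have hp := detT_pos (n := n) (d := d) (α := α) hh
  have := Measure.map_linearMap_addHaar_eq_smul_addHaar (volume : Measure (E n d))
    (f := (TinvL d α h : E n d →ₗ[ℝ] E n d)) (by rw [det_TinvL hh]; positivity)
  rw [det_TinvL hh, inv_inv, abs_of_pos hp] at this
  exact this

/-- The affine change of variables `z = 𝕋_h⁻¹ (y - c)`. -/
theorem integrable_comp_Tinv {n : ℕ} {d : Fin n → ℕ} {α h : ℝ} (hh : 0 < h) {g : E n d → ℝ}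
    (hg : Integrable g) (c : E n d) :
    Integrable (fun y => g (Tinv α h (y - c))) ∧
      ∫ y, g (Tinv α h (y - c)) = detT n d α h * ∫ z, g z := by
  have hm : AEMeasurable (TinvL d α h) (volume : Measure (E n d)) :=
    (TinvL d α h).continuous.measurable.aemeasurable
  have hg' : Integrable g (Measure.map (TinvL d α h) (volume : Measure (E n d))) := by
    rw [map_TinvL hh]
    exact hg.smul_measure ENNReal.ofReal_ne_top
  constructor
  · exact (hg'.comp_aemeasurable hm).comp_sub_right c
  · have h1 := integral_sub_right_eq_self (μ := (volume : Measure (E n d)))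
      (fun y => g (Tinv α h y)) c
    have h2 := integral_map hm hg'.aestronglyMeasurable
    rw [map_TinvL hh, integral_smul_measure, ENNReal.toReal_ofReal (detT_pos hh).le,
      smul_eq_mul] at h2
    rw [h1, h2]
    rfl

/-! ### Integral bounds -/

theorem exists_Tinv_eq {n : ℕ} {d : Fin n → ℕ} {α h : ℝ} (hh : 0 < h) (w : E n d) :
    ∃ w' : E n d, Tinv α h w' = w := by
  refine ⟨fun i => h ^ ((1 : ℝ) / α + ((i : ℕ) : ℝ)) • w i, ?_⟩
  funext i
  have : h ^ ((1 : ℝ) / α + ((i : ℕ) : ℝ)) ≠ 0 := (Real.rpow_pos_of_pos hh _).ne'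
  simp only [Tinv, smul_smul, inv_mul_cancel₀ this, one_smul]

/-- Pointwise estimate behind the smoothing bound: if `q` is comparable to `z - w`, then a
polynomial tail in `z - w` absorbs the factor `‖z‖ ^ γ` at the price of `(1 + ‖w‖) ^ γ`. -/
theorem tail_bound {X : Type*} [NormedAddCommGroup X] {γ p C : ℝ} (hγ : 0 ≤ γ) (hp : γ ≤ p)
    (hC : 0 < C) (z w q : X) (hq : 1 + ‖q‖ ≤ C * (1 + ‖z - w‖)) :
    ‖z‖ ^ γ * (1 + ‖z - w‖) ^ (-p)
      ≤ (1 + ‖w‖) ^ γ * (C ^ (p - γ) * (1 + ‖q‖) ^ (-(p - γ))) := by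
  have hr : 0 < 1 + ‖z - w‖ := by positivity
  have hq0 : 0 < 1 + ‖q‖ := by positivity
  have h1 : ‖z‖ ^ γ ≤ (1 + ‖w‖) ^ γ * (1 + ‖z - w‖) ^ γ := by
    rw [← Real.mul_rpow (by positivity) hr.le]
    refine Real.rpow_le_rpow (norm_nonneg _) ?_ hγ
    have : ‖z‖ ≤ ‖z - w‖ + ‖w‖ := by simpa using norm_add_le (z - w) w
    nlinarith [norm_nonneg w, norm_nonneg (z - w), mul_nonneg (norm_nonneg w) (norm_nonneg (z - w))]
  have h2 : (1 + ‖z - w‖) ^ (-(p - γ)) ≤ C ^ (p - γ) * (1 + ‖q‖) ^ (-(p - γ)) := by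
    have h3 : (C * (1 + ‖z - w‖)) ^ (-(p - γ)) ≤ (1 + ‖q‖) ^ (-(p - γ)) :=
      Real.rpow_le_rpow_of_nonpos hq0 hq (by linarith)
    rw [Real.mul_rpow hC.le hr.le, Real.rpow_neg hC.le,
      inv_mul_le_iff₀ (Real.rpow_pos_of_pos hC _)] at h3
    exact h3
  calc _ ≤ (1 + ‖w‖) ^ γ * (1 + ‖z - w‖) ^ γ * (1 + ‖z - w‖) ^ (-p) := by gcongr
    _ = (1 + ‖w‖) ^ γ * (1 + ‖z - w‖) ^ (-(p - γ)) := by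
      rw [mul_assoc, ← Real.rpow_add hr]; ring_nf
    _ ≤ _ := by gcongr

theorem integrable_one_add_rpow {X : Type*} [NormedAddCommGroup X] [MeasurableSpace X]
    [OpensMeasurableSpace X] {μ : Measure X} [IsFiniteMeasure μ] {γ : ℝ} (hγ : 0 ≤ γ)
    (h : Integrable (fun w : X => ‖w‖ ^ γ) μ) : Integrable (fun w : X => (1 + ‖w‖) ^ γ) μ := by
  refine (((integrable_const (1 : ℝ)).add h).const_mul (2 ^ γ)).mono'
    (Measurable.aestronglyMeasurable (by fun_prop)) (ae_of_all _ fun w => ?_)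
  rw [Real.norm_of_nonneg (by positivity)]
  have hw := norm_nonneg w
  have h0 : 0 ≤ ‖w‖ ^ γ := by positivity
  have h2 : (0 : ℝ) ≤ 2 ^ γ := by positivity
  simp only [Pi.add_apply]
  rcases le_total ‖w‖ 1 with h1 | h1
  · calc (1 + ‖w‖) ^ γ ≤ 2 ^ γ := by gcongr; linarith
      _ ≤ _ := le_mul_of_one_le_right h2 (by linarith)
  · calc (1 + ‖w‖) ^ γ ≤ (2 * ‖w‖) ^ γ := by gcongr; linarith
      _ = 2 ^ γ * ‖w‖ ^ γ := Real.mul_rpow (by norm_num) hw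
      _ ≤ _ := by gcongr; linarith

/-- The integral over `y` of the contribution of one fixed point `w`. Moving `w` into the starting
point of the forward flow makes the comparison of flows applicable. -/
theorem slice_bound {n : ℕ} {d : Fin n → ℕ} {α γ p C h : ℝ} (hh : 0 < h) (hγ : 0 ≤ γ)
    (hp : ((∑ i : Fin n, d i : ℕ) : ℝ) < p - γ) (hC : 0 < C)
    {f g : E n d → E n d} (hf : Measurable f)
    (hfg : ∀ x y : E n d, 1 + ‖Tinv α h (y - g x)‖ ≤ C * (1 + ‖Tinv α h (f y - x)‖))
    (x w : E n d) :
    Integrable (fun y => ‖Tinv α h (f y - x)‖ ^ γ * (1 + ‖Tinv α h (f y - x) - w‖) ^ (-p)) ∧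
    ∫ y, ‖Tinv α h (f y - x)‖ ^ γ * (1 + ‖Tinv α h (f y - x) - w‖) ^ (-p) ≤
      detT n d α h * (C ^ (p - γ) * ∫ z : E n d, (1 + ‖z‖) ^ (-(p - γ))) * (1 + ‖w‖) ^ γ := by
  obtain ⟨w', rfl⟩ := exists_Tinv_eq (d := d) (α := α) hh w
  have hfin : (Module.finrank ℝ (E n d) : ℝ) < p - γ := by
    simpa [Module.finrank_pi_fintype] using hp
  have hI : Integrable (fun z : E n d => (1 + ‖z‖) ^ (-(p - γ))) := integrable_one_add_norm hfin
  obtain ⟨h1, h2⟩ := integrable_comp_Tinv (α := α) hh hI (g (x + w'))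
  have hpγ : γ ≤ p := by
    have : (0 : ℝ) ≤ ((∑ i : Fin n, d i : ℕ) : ℝ) := Nat.cast_nonneg _
    linarith
  have hpt : ∀ y, ‖Tinv α h (f y - x)‖ ^ γ *
      (1 + ‖Tinv α h (f y - x) - Tinv α h w'‖) ^ (-p) ≤ (1 + ‖Tinv α h w'‖) ^ γ *
      (C ^ (p - γ) * (1 + ‖Tinv α h (y - g (x + w'))‖) ^ (-(p - γ))) := by
    intro y
    refine tail_bound hγ hpγ hC _ _ _ ?_
    have e : Tinv α h (f y - x) - Tinv α h w' = Tinv α h (f y - (x + w')) := by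
      rw [← TinvL_apply, ← TinvL_apply, ← TinvL_apply, ← map_sub, sub_sub]
    rw [e]
    exact hfg (x + w') y
  have hz : Measurable fun y => Tinv α h (f y - x) :=
    (TinvL d α h).continuous.measurable.comp (hf.sub_const x)
  have hint := (h1.const_mul (C ^ (p - γ))).const_mul ((1 + ‖Tinv α h w'‖) ^ γ)
  have hmain : Integrable (fun y => ‖Tinv α h (f y - x)‖ ^ γ *
      (1 + ‖Tinv α h (f y - x) - Tinv α h w'‖) ^ (-p)) := by
    refine hint.mono' (Measurable.aestronglyMeasurable (by fun_prop)) (ae_of_all _ fun y => ?_)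
    rw [Real.norm_of_nonneg (by positivity)]
    exact hpt y
  refine ⟨hmain, (integral_mono hmain hint hpt).trans (le_of_eq ?_)⟩
  rw [integral_const_mul, integral_const_mul, h2]
  ring

/-- Corollary `Smoothing_effect`, Eq. (3.smoothing).  Let `θ` be a flow for
`(A,F)`, `γ ∈ [0,α)`, `P̄` a finite measure with finite `γ`-moment, and `p̄ ≥ 0` with
`p̄(z) ≤ C₀ ∫ (1+|z−w|)^{−(N+2)} P̄(dw)`.  Then there is `C > 0` such that for all
`0 ≤ t < s ≤ T` and `x`:
`∫ |𝕋_{s−t}⁻¹(θ_{t,s}(y)−x)|^γ (det 𝕋_{s−t})⁻¹ p̄(𝕋_{s−t}⁻¹(θ_{t,s}(y)−x)) dy ≤ C`. -/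
theorem stmt5 {n : ℕ} [NeZero n] {d : Fin n → ℕ} {α T K : ℝ}
    {A : ℝ → E n d →L[ℝ] E n d} {F : ℝ → E n d → E n d} {β : Fin n → ℝ}
    (hc : ChainHyp n d α T K A F β)
    (θ : ℝ → ℝ → E n d → E n d) (hθ : IsFlow T A F θ)
    (γ : ℝ) (hγ0 : 0 ≤ γ) (hγα : γ < α)
    (Pb : Measure (E n d)) [IsFiniteMeasure Pb]
    (hmom : Integrable (fun w : E n d => ‖w‖ ^ γ) Pb)
    (pbar : E n d → ℝ) (hpbar0 : ∀ z, 0 ≤ pbar z)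
    (C₀ : ℝ) (hC₀ : 0 < C₀)
    (hpbar : ∀ z : E n d,
      pbar z ≤ C₀ * ∫ w, (1 + ‖z - w‖) ^ (-(((∑ i : Fin n, d i : ℕ) : ℝ) + 2)) ∂Pb) :
    ∃ C : ℝ, 0 < C ∧ ∀ t s : ℝ, 0 ≤ t → t < s → s ≤ T → ∀ x : E n d,
      (∫ y : E n d, ‖Tinv α (s - t) (θ t s y - x)‖ ^ γ *
          ((detT n d α (s - t))⁻¹ * pbar (Tinv α (s - t) (θ t s y - x)))) ≤ C := by
  obtain ⟨C, hC, hcmp⟩ := flow_compare hc hθ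
  have hγ2 : γ < 2 := hγα.trans hc.hα₂
  set p : ℝ := ((∑ i : Fin n, d i : ℕ) : ℝ) + 2 with hp
  set J : ℝ := C ^ (p - γ) * ∫ z : E n d, (1 + ‖z‖) ^ (-(p - γ)) with hJ
  have hJ0 : 0 ≤ J := mul_nonneg (by positivity) (integral_nonneg fun z => by positivity)
  have hW := integrable_one_add_rpow hγ0 hmom
  have hW0 : 0 ≤ ∫ w, (1 + ‖w‖) ^ γ ∂Pb := integral_nonneg fun w => by positivity
  refine ⟨C₀ * J * (∫ w, (1 + ‖w‖) ^ γ ∂Pb) + 1, by positivity, fun t s ht hts hs x => ?_⟩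
  have hh : 0 < s - t := sub_pos.2 hts
  have hD : 0 < detT n d α (s - t) := detT_pos hh
  have hf : Measurable (θ t s) :=
    hθ.1.comp (measurable_const.prodMk (measurable_const.prodMk measurable_id))
  set z : E n d → E n d := fun y => Tinv α (s - t) (θ t s y - x) with hz
  have hzm : Measurable z := (TinvL d α (s - t)).continuous.measurable.comp (hf.sub_const x)
  set Φ : E n d × E n d → ℝ := fun q => ‖z q.1‖ ^ γ * (1 + ‖z q.1 - q.2‖) ^ (-p) with hΦ
  have hΦ0 : ∀ q, 0 ≤ Φ q := fun q => by positivity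
  have hslice := slice_bound (γ := γ) (p := p) hh hγ0 (by rw [hp]; linarith) hC hf
    (hcmp t s ht hts hs) x
  have hΦm : AEStronglyMeasurable Φ ((volume : Measure (E n d)).prod Pb) := by
    have h1 : Measurable fun q : E n d × E n d => z q.1 := hzm.comp measurable_fst
    exact Measurable.aestronglyMeasurable (by fun_prop)
  have hbound : Integrable (fun w : E n d => detT n d α (s - t) * J * (1 + ‖w‖) ^ γ) Pb :=
    hW.const_mul _
  have hΦi : Integrable Φ ((volume : Measure (E n d)).prod Pb) := by
    refine (integrable_prod_iff' hΦm).2 ⟨ae_of_all _ fun w => (hslice w).1, ?_⟩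
    refine hbound.mono' hΦm.norm.prod_swap.integral_prod_right' (ae_of_all _ fun w => ?_)
    simp only [Real.norm_of_nonneg (hΦ0 _)]
    rw [Real.norm_of_nonneg (integral_nonneg fun y => hΦ0 _)]
    exact (hslice w).2
  have hswap : ∫ y, ∫ w, Φ (y, w) ∂Pb = ∫ w, (∫ y, Φ (y, w)) ∂Pb :=
    integral_integral_swap (f := fun y w => Φ (y, w)) hΦi
  have hle : ∫ w, (∫ y, Φ (y, w)) ∂Pb ≤ detT n d α (s - t) * J * ∫ w, (1 + ‖w‖) ^ γ ∂Pb := by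
    rw [← integral_const_mul]
    exact integral_mono hΦi.integral_prod_right hbound fun w => (hslice w).2
  -- comparison with an integrable majorant needs no measurability of `pbar`
  calc ∫ y : E n d, ‖z y‖ ^ γ * ((detT n d α (s - t))⁻¹ * pbar (z y))
      ≤ ∫ y, (detT n d α (s - t))⁻¹ * C₀ * ∫ w, Φ (y, w) ∂Pb := by
        refine integral_mono_of_nonneg (ae_of_all _ fun y => ?_)
          (hΦi.integral_prod_left.const_mul _) (ae_of_all _ fun y => ?_)
        · have := hpbar0 (z y)
          simp only [Pi.zero_apply]
          positivity
        · simp only [hΦ]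
          rw [integral_const_mul]
          calc _ ≤ ‖z y‖ ^ γ * ((detT n d α (s - t))⁻¹ *
                (C₀ * ∫ w, (1 + ‖z y - w‖) ^ (-p) ∂Pb)) := by
                gcongr
                exact hpbar (z y)
            _ = _ := by ring
    _ = (detT n d α (s - t))⁻¹ * C₀ * ∫ w, (∫ y, Φ (y, w)) ∂Pb := by
        rw [integral_const_mul, hswap]
    _ ≤ (detT n d α (s - t))⁻¹ * C₀ *
          (detT n d α (s - t) * J * ∫ w, (1 + ‖w‖) ^ γ ∂Pb) := by gcongr
    _ = C₀ * J * ∫ w, (1 + ‖w‖) ^ γ ∂Pb := by field_simp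
    _ ≤ _ := by linarith

end
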